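/- Let A be a finite-dimensional left Leibniz algebra over a field F and let B be a subinvariant subalgebra of A with Z_A(B) = {0}. Then Z_A(B^ω) ⊆ B^ω, where B^ω = ⋂_{i≥1} B^i. -/

import Mathlib

open Submodule

section LeibnizDefs

variable {F : Type*} {A : Type*} [Field F] [AddCommGroup A] [Module F A]

/-- The span of all products `b*c` with `b ∈ B`, `c ∈ C`. -/
def mulSub (mul : A →ₗ[F] A →ₗ[F] A) (B C : Submodule F A) : Submodule F A :=
  Submodule.span F {z : A | ∃ b ∈ B, ∃ c ∈ C, mul b c = z}

/-- `fSub mul B C = B·C + C·B`, the function `f(B,C)`. -/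
def fSub (mul : A →ₗ[F] A →ₗ[F] A) (B C : Submodule F A) : Submodule F A :=
  mulSub mul B C ⊔ mulSub mul C B

/-- `fIter mul B C n = f^{n+1}(B,C)` (so index `0` is `f^1(B,C) = f(B,C)`). -/
def fIter (mul : A →ₗ[F] A →ₗ[F] A) (B C : Submodule F A) : ℕ → Submodule F A
  | 0 => fSub mul B C
  | n + 1 => fSub mul B (fIter mul B C n)

/-- `lcs mul B n = B^{n+1}`, the lower central series (index `0` is `B^1 = B`). -/
def lcs (mul : A →ₗ[F] A →ₗ[F] A) (B : Submodule F A) : ℕ → Submodule F A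
  | 0 => B
  | n + 1 => mulSub mul B (lcs mul B n)

/-- `ds mul B n = B^{(n+1)}`, the derived series (index `0` is `B^{(1)} = B`). -/
def ds (mul : A →ₗ[F] A →ₗ[F] A) (B : Submodule F A) : ℕ → Submodule F A
  | 0 => B
  | n + 1 => mulSub mul (ds mul B n) (ds mul B n)

/-- `B^ω = ⋂_{i ≥ 1} B^i`. -/
def omegaSub (mul : A →ₗ[F] A →ₗ[F] A) (B : Submodule F A) : Submodule F A :=
  ⨅ n, lcs mul B n

/-- `B` is a subalgebra: a subspace closed under multiplication. -/
def IsSubalg (mul : A →ₗ[F] A →ₗ[F] A) (B : Submodule F A) : Prop :=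
  ∀ x ∈ B, ∀ y ∈ B, mul x y ∈ B

/-- `I` is an ideal of the subalgebra `S`: `I ⊆ S` and `xI + Ix ⊆ I` for all `x ∈ S`. -/
def IsIdealIn (mul : A →ₗ[F] A →ₗ[F] A) (I S : Submodule F A) : Prop :=
  I ≤ S ∧ ∀ x ∈ S, ∀ y ∈ I, mul x y ∈ I ∧ mul y x ∈ I

/-- `B` is subinvariant in `S`: there is a chain of subalgebras
`B = c 0 ⊆ c 1 ⊆ ⋯ ⊆ c t = S` with each term an ideal of the next. -/
def IsSubinvariantIn (mul : A →ₗ[F] A →ₗ[F] A) (B S : Submodule F A) : Prop :=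
  ∃ (t : ℕ) (c : ℕ → Submodule F A), c 0 = B ∧ c t = S ∧
    (∀ i ≤ t, IsSubalg mul (c i)) ∧ ∀ i < t, IsIdealIn mul (c i) (c (i + 1))

/-- `B` is nilpotent: `B^m = 0` for some `m`. -/
def IsNilpotentSub (mul : A →ₗ[F] A →ₗ[F] A) (B : Submodule F A) : Prop :=
  ∃ m, lcs mul B m = ⊥

/-- `B` is solvable: `B^{(m)} = 0` for some `m`. -/
def IsSolvableSub (mul : A →ₗ[F] A →ₗ[F] A) (B : Submodule F A) : Prop :=
  ∃ m, ds mul B m = ⊥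

/-- The centralizer `Z_A(B) = {x : xb = 0 = bx for all b ∈ B}`. -/
def centralizerSet (mul : A →ₗ[F] A →ₗ[F] A) (B : Submodule F A) : Set A :=
  {x : A | ∀ b ∈ B, mul x b = 0 ∧ mul b x = 0}

/-- `R` is the radical (the maximal solvable ideal) of the subalgebra `S`. -/
def IsRadicalIn (mul : A →ₗ[F] A →ₗ[F] A) (S R : Submodule F A) : Prop :=
  IsIdealIn mul R S ∧ IsSolvableSub mul R ∧
    ∀ T, IsIdealIn mul T S → IsSolvableSub mul T → T ≤ R

/-- `N` is the nilradical (the maximal nilpotent ideal) of the subalgebra `S`. -/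
def IsNilradicalIn (mul : A →ₗ[F] A →ₗ[F] A) (S N : Submodule F A) : Prop :=
  IsIdealIn mul N S ∧ IsNilpotentSub mul N ∧
    ∀ T, IsIdealIn mul T S → IsNilpotentSub mul T → T ≤ N

/-- `H` is a Cartan subalgebra: a nilpotent self-normalizing subalgebra. -/
def IsCartan (mul : A →ₗ[F] A →ₗ[F] A) (H : Submodule F A) : Prop :=
  IsSubalg mul H ∧ IsNilpotentSub mul H ∧
    ∀ x : A, (∀ h ∈ H, mul x h ∈ H ∧ mul h x ∈ H) → x ∈ H

/-- The subalgebra generated by a set: the smallest subalgebra containing it. -/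
def subalgGen (mul : A →ₗ[F] A →ₗ[F] A) (s : Set A) : Submodule F A :=
  sInf {S : Submodule F A | IsSubalg mul S ∧ s ⊆ (S : Set A)}

end LeibnizDefs

/-!
Write `W = B^ω`, so that `W ⊆ B·W` when `B` is finite-dimensional. Since `B` is subinvariant, left
multiplication by elements of `B` pushes a subspace down the chain to `B` and then down the lower
central series of `B`; hence every subspace `X ⊆ W + B·X` lies in `W`.

Applied to `X = S·W` and to `X = W·S`, with `S` running up the chain, this shows that `W` is an
ideal of `A`. Then `Z = Z_A(W)` is stable under left multiplications, and the Lie algebra of left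
multiplications by `B` on a finite-dimensional `B`-stable `Y ⊆ Z` is nilpotent because `W` acts as
zero. The hypothesis `Z_A(B) = 0` forbids nonzero invariants in `Z`, so Fitting's lemma gives
`Y = B·Y`, whence `Y ⊆ W`. For `z ∈ Z`, going up the chain, `B·z` already lies in `W ⊆ B`, so
`Y = (Z ∩ B) + F·z` is such a subspace.
-/

section Fitting

variable {R L M : Type*} [CommRing R] [LieRing L] [LieAlgebra R L] [LieRing.IsNilpotent L]
  [AddCommGroup M] [Module R M] [LieRingModule L M] [LieModule R L M] [IsNoetherian R M]

theorem genWeightSpace_zero_eq_bot_of_maxTrivSubmodule_eq_bot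
    (h : LieModule.maxTrivSubmodule R L M = ⊥) :
    LieModule.genWeightSpace M (0 : L → R) = ⊥ := by
  by_contra hne
  have : Nontrivial (LieModule.genWeightSpace M (0 : L → R)) :=
    (LieSubmodule.nontrivial_iff_ne_bot R L M).mpr hne
  have := LieModule.nontrivial_max_triv_of_isNilpotent R L (LieModule.genWeightSpace M (0 : L → R))
  obtain ⟨m, hm⟩ := exists_ne
    (0 : LieModule.maxTrivSubmodule R L (LieModule.genWeightSpace M (0 : L → R)))
  have hm_triv : ((m : LieModule.genWeightSpace M (0 : L → R)) : M) ∈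
      LieModule.maxTrivSubmodule R L M := fun x ↦ congrArg Subtype.val (m.2 x)
  rw [h, LieSubmodule.mem_bot] at hm_triv
  exact hm (Subtype.ext (Subtype.ext hm_triv))

theorem lie_top_top_eq_top_of_maxTrivSubmodule_eq_bot [IsArtinian R M]
    (h : LieModule.maxTrivSubmodule R L M = ⊥) :
    ⁅(⊤ : LieIdeal R L), (⊤ : LieSubmodule R L M)⁆ = ⊤ := by
  have hcompl := LieModule.isCompl_genWeightSpace_zero_posFittingComp R L M
  rw [genWeightSpace_zero_eq_bot_of_maxTrivSubmodule_eq_bot h] at hcompl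
  have hle : LieModule.posFittingComp R L M ≤ LieModule.lowerCentralSeries R L M 1 :=
    (LieModule.posFittingComp_le_iInf_lowerCentralSeries R L M).trans (iInf_le _ 1)
  rwa [eq_top_of_bot_isCompl hcompl, top_le_iff] at hle

end Fitting

section LeftLeibniz

attribute [local instance] LieRing.ofAssociativeRing

variable {F A : Type*} [Field F] [AddCommGroup A] [Module F A] {mul : A →ₗ[F] A →ₗ[F] A}
  {B C D I S T X Y : Submodule F A}

/-- The left Leibniz identity: left multiplications are derivations of `mul`. -/
def IsLeftLeibniz (mul : A →ₗ[F] A →ₗ[F] A) : Prop :=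
  ∀ x y z : A, mul x (mul y z) = mul (mul x y) z + mul y (mul x z)

theorem IsLeftLeibniz.mul_mul_eq_sub (h : IsLeftLeibniz mul) (x y z : A) :
    mul (mul x y) z = mul x (mul y z) - mul y (mul x z) :=
  eq_sub_of_add_eq (h x y z).symm

theorem mulSub_eq_map₂ : mulSub mul B C = map₂ mul B C :=
  (map₂_eq_span_image2 mul B C).symm

theorem mul_mem_mulSub {b c : A} (hb : b ∈ B) (hc : c ∈ C) : mul b c ∈ mulSub mul B C :=
  subset_span ⟨b, hb, c, hc, rfl⟩

theorem mulSub_le : mulSub mul B C ≤ D ↔ ∀ b ∈ B, ∀ c ∈ C, mul b c ∈ D :=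
  mulSub_eq_map₂ (mul := mul) ▸ map₂_le

theorem mulSub_mono_right (h : C ≤ D) : mulSub mul B C ≤ mulSub mul B D :=
  mulSub_le.mpr fun _ hb _ hc ↦ mul_mem_mulSub hb (h hc)

section LowerCentralSeries

theorem IsSubalg.lcs_antitone (hB : IsSubalg mul B) : Antitone (lcs mul B) := by
  refine antitone_nat_of_succ_le fun n ↦ ?_
  induction n with
  | zero => exact mulSub_le.mpr hB
  | succ n ih => exact mulSub_mono_right ih

theorem IsSubalg.lcs_le (hB : IsSubalg mul B) (n : ℕ) : lcs mul B n ≤ B :=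
  hB.lcs_antitone n.zero_le

theorem omegaSub_le_lcs (n : ℕ) : omegaSub mul B ≤ lcs mul B n :=
  iInf_le _ n

theorem omegaSub_le : omegaSub mul B ≤ B :=
  omegaSub_le_lcs 0

theorem mul_mem_lcs_add (hleib : IsLeftLeibniz mul) {i j : ℕ} {x y : A} (hx : x ∈ lcs mul B i)
    (hy : y ∈ lcs mul B j) : mul x y ∈ lcs mul B (i + j + 1) := by
  induction i generalizing j x y with
  | zero =>
    rw [Nat.zero_add]
    exact mul_mem_mulSub hx hy
  | succ i ih =>
    suffices lcs mul B (i + 1) ≤ (lcs mul B (i + 1 + j + 1)).comap (mul.flip y) from this hx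
    refine mulSub_le.mpr fun b hb c hc ↦ ?_
    rw [mem_comap, LinearMap.flip_apply, hleib.mul_mul_eq_sub, Nat.succ_add_eq_add_succ]
    exact sub_mem (mul_mem_mulSub hb (ih hc hy)) (ih hc (mul_mem_mulSub hb hy))

theorem IsSubalg.isIdealIn_lcs (hB : IsSubalg mul B) (hleib : IsLeftLeibniz mul) (n : ℕ) :
    IsIdealIn mul (lcs mul B n) B :=
  ⟨hB.lcs_le n, fun _ hx _ hy ↦ ⟨hB.lcs_antitone n.le_succ (mul_mem_mulSub hx hy),
    hB.lcs_antitone n.le_succ (mul_mem_lcs_add hleib (j := 0) hy hx)⟩⟩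

theorem IsSubalg.isIdealIn_omegaSub (hB : IsSubalg mul B) (hleib : IsLeftLeibniz mul) :
    IsIdealIn mul (omegaSub mul B) B := by
  refine ⟨omegaSub_le, fun x hx y hy ↦ ?_⟩
  have h (n : ℕ) := (hB.isIdealIn_lcs hleib n).2 x hx y (omegaSub_le_lcs n hy)
  exact ⟨mem_iInf _ |>.mpr fun n ↦ (h n).1, mem_iInf _ |>.mpr fun n ↦ (h n).2⟩

theorem IsSubalg.exists_lcs_eq_omegaSub [FiniteDimensional F B] (hB : IsSubalg mul B) :
    ∃ n, lcs mul B n = omegaSub mul B := by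
  obtain ⟨n, hn⟩ := IsArtinian.monotone_stabilizes (R := F) (M := B)
    ⟨fun n ↦ OrderDual.toDual ((lcs mul B n).submoduleOf B),
      fun _ _ h ↦ comap_mono (hB.lcs_antitone h)⟩
  have hstab (m : ℕ) (hm : n ≤ m) : lcs mul B n ≤ lcs mul B m := fun x hx ↦
    show (⟨x, hB.lcs_le n hx⟩ : B) ∈ (lcs mul B m).submoduleOf B from
      OrderDual.toDual_inj.mp (hn m hm) ▸ hx
  refine ⟨n, le_antisymm (le_iInf fun m ↦ ?_) (omegaSub_le_lcs n)⟩
  exact (le_total n m).elim (hstab m) fun hm ↦ hB.lcs_antitone hm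

theorem IsSubalg.omegaSub_le_mulSub [FiniteDimensional F B] (hB : IsSubalg mul B) :
    omegaSub mul B ≤ mulSub mul B (omegaSub mul B) := by
  obtain ⟨n, hn⟩ := hB.exists_lcs_eq_omegaSub
  exact (omegaSub_le_lcs (n + 1)).trans_eq (by rw [lcs, hn])

end LowerCentralSeries

section Subinvariant

theorem IsSubinvariantIn.isSubalg_left (hB : IsSubinvariantIn mul B S) : IsSubalg mul B := by
  obtain ⟨t, c, rfl, -, hsub, -⟩ := hB
  exact hsub 0 t.zero_le

theorem IsSubinvariantIn.induction {P : Submodule F A → Prop} (hB : IsSubinvariantIn mul B S)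
    (base : P B)
    (step : ∀ I T, IsSubinvariantIn mul B I → IsIdealIn mul I T → P I → P T) : P S := by
  obtain ⟨t, c, hc0, rfl, hsub, hideal⟩ := hB
  suffices ∀ i ≤ t, P (c i) from this t le_rfl
  intro i hi
  induction i with
  | zero => rwa [hc0]
  | succ i ih =>
    have hBi : IsSubinvariantIn mul B (c i) :=
      ⟨i, c, hc0, rfl, fun j hj ↦ hsub j (by lia), fun j hj ↦ hideal j (by lia)⟩
    exact step _ _ hBi (hideal i hi) (ih (by lia))

theorem IsSubinvariantIn.le (hB : IsSubinvariantIn mul B S) : B ≤ S :=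
  hB.induction le_rfl fun _ _ _ hIT hBI ↦ hBI.trans hIT.1

theorem le_omegaSub_of_le_of_le_sup_mulSub (hXB : X ≤ B)
    (hX : X ≤ omegaSub mul B ⊔ mulSub mul B X) : X ≤ omegaSub mul B := by
  refine le_iInf fun n ↦ ?_
  induction n with
  | zero => exact hXB
  | succ n ih => exact hX.trans (sup_le (omegaSub_le_lcs (n + 1)) (mulSub_mono_right ih))

theorem IsSubinvariantIn.le_omegaSub_of_le_sup_mulSub (hB : IsSubinvariantIn mul B S)
    (hXS : X ≤ S) (hX : X ≤ omegaSub mul B ⊔ mulSub mul B X) : X ≤ omegaSub mul B := by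
  refine hB.induction (P := fun S ↦ X ≤ S → X ≤ omegaSub mul B)
    (fun hXB ↦ le_omegaSub_of_le_of_le_sup_mulSub hXB hX) (fun I T hBI hIT ih hXT ↦ ?_) hXS
  refine ih (hX.trans (sup_le (omegaSub_le.trans hBI.le) (mulSub_le.mpr fun b hb x hx ↦ ?_)))
  exact (hIT.2 x (hXT hx) b (hBI.le hb)).2

theorem IsSubinvariantIn.isIdealIn_omegaSub_of_isIdealIn [FiniteDimensional F B]
    (hB : IsSubinvariantIn mul B I) (hleib : IsLeftLeibniz mul) (hIT : IsIdealIn mul I T)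
    (hW : IsIdealIn mul (omegaSub mul B) I) : IsIdealIn mul (omegaSub mul B) T := by
  set W := omegaSub mul B
  have hWBW : W ≤ mulSub mul B W := hB.isSubalg_left.omegaSub_le_mulSub
  have hleft : mulSub mul T W ≤ W := by
    refine hB.le_omegaSub_of_le_sup_mulSub
      (mulSub_le.mpr fun x hx w hw ↦ (hIT.2 x hx w (hW.1 hw)).1) (mulSub_le.mpr fun x hx ↦ ?_)
    suffices W ≤ (W ⊔ mulSub mul B (mulSub mul T W)).comap (mul x) from this
    refine hWBW.trans (mulSub_le.mpr fun b hb w hw ↦ ?_)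
    rw [mem_comap, hleib x b w]
    exact add_mem_sup (hW.2 _ (hIT.2 x hx b (hB.le hb)).1 w hw).1
      (mul_mem_mulSub hb (mul_mem_mulSub hx hw))
  have hright : mulSub mul W T ≤ W := by
    refine hB.le_omegaSub_of_le_sup_mulSub
      (mulSub_le.mpr fun w hw x hx ↦ (hIT.2 x hx w (hW.1 hw)).2)
      (mulSub_le.mpr fun w hw x hx ↦ ?_)
    suffices W ≤ (W ⊔ mulSub mul B (mulSub mul W T)).comap (mul.flip x) from this hw
    refine hWBW.trans (mulSub_le.mpr fun b hb w hw ↦ ?_)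
    rw [mem_comap, LinearMap.flip_apply, hleib.mul_mul_eq_sub]
    exact sub_mem (mem_sup_right (mul_mem_mulSub hb (mul_mem_mulSub hw hx)))
      (mem_sup_left (hW.2 _ (hIT.2 x hx b (hB.le hb)).2 w hw).2)
  exact ⟨hW.1.trans hIT.1, fun x hx w hw ↦
    ⟨hleft (mul_mem_mulSub hx hw), hright (mul_mem_mulSub hw hx)⟩⟩

theorem IsSubinvariantIn.isIdealIn_omegaSub [FiniteDimensional F B]
    (hB : IsSubinvariantIn mul B S) (hleib : IsLeftLeibniz mul) :
    IsIdealIn mul (omegaSub mul B) S :=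
  hB.induction (hB.isSubalg_left.isIdealIn_omegaSub hleib) fun _ _ hBI hIT hW ↦
    hBI.isIdealIn_omegaSub_of_isIdealIn hleib hIT hW

end Subinvariant

section LeftMultiplication

/-- The endomorphisms of `Y` that are restrictions of left multiplications by elements of `C`.
Only those `c ∈ C` with `c·Y ⊆ Y` contribute. -/
def leftMulEnd (mul : A →ₗ[F] A →ₗ[F] A) (C Y : Submodule F A) :
    Submodule F (Module.End F Y) where
  carrier := {f | ∃ c ∈ C, ∀ y : Y, (f y : A) = mul c y}
  zero_mem' := ⟨0, zero_mem C, fun y ↦ by simp⟩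
  add_mem' := by
    rintro f g ⟨b, hb, hf⟩ ⟨c, hc, hg⟩
    exact ⟨b + c, add_mem hb hc, fun y ↦ by simp [hf, hg]⟩
  smul_mem' := by
    rintro r f ⟨c, hc, hf⟩
    exact ⟨r • c, C.smul_mem r hc, fun y ↦ by simp [hf]⟩

theorem leftMulEnd_mono (h : C ≤ D) : leftMulEnd mul C Y ≤ leftMulEnd mul D Y :=
  fun _ ⟨c, hc, hf⟩ ↦ ⟨c, h hc, hf⟩

theorem lie_mem_leftMulEnd (hleib : IsLeftLeibniz mul) {f g : Module.End F Y}
    (hf : f ∈ leftMulEnd mul C Y) (hg : g ∈ leftMulEnd mul D Y) :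
    ⁅f, g⁆ ∈ leftMulEnd mul (mulSub mul C D) Y := by
  obtain ⟨c, hc, hf⟩ := hf
  obtain ⟨d, hd, hg⟩ := hg
  refine ⟨mul c d, mul_mem_mulSub hc hd, fun y ↦ ?_⟩
  simp [LieRing.of_associative_ring_bracket, hf, hg, hleib.mul_mul_eq_sub]

/-- The Lie algebra of endomorphisms of `Y` induced by left multiplications by elements of a
subalgebra `B`. -/
def leftMulLieSubalgebra (hleib : IsLeftLeibniz mul) (hB : IsSubalg mul B) (Y : Submodule F A) :
    LieSubalgebra F (Module.End F Y) where
  __ := leftMulEnd mul B Y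
  lie_mem' hf hg := leftMulEnd_mono (mulSub_le.mpr hB) (lie_mem_leftMulEnd hleib hf hg)

theorem lowerCentralSeries_leftMulLieSubalgebra_le (hleib : IsLeftLeibniz mul)
    (hB : IsSubalg mul B) (k : ℕ) :
    (LieModule.lowerCentralSeries F (leftMulLieSubalgebra hleib hB Y)
      (leftMulLieSubalgebra hleib hB Y) k).toSubmodule ≤
      (leftMulEnd mul (lcs mul B k) Y).comap (leftMulLieSubalgebra hleib hB Y).subtype := by
  induction k with
  | zero => exact fun f _ ↦ f.2
  | succ k ih =>
    rw [LieModule.lowerCentralSeries_succ, LieSubmodule.lieIdeal_oper_eq_linear_span', span_le]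
    rintro _ ⟨f, -, g, hg, rfl⟩
    exact lie_mem_leftMulEnd hleib f.2 (ih hg)

theorem isNilpotent_leftMulLieSubalgebra (hleib : IsLeftLeibniz mul) (hB : IsSubalg mul B) {n : ℕ}
    (hn : ∀ b ∈ lcs mul B n, ∀ y ∈ Y, mul b y = 0) :
    LieRing.IsNilpotent (leftMulLieSubalgebra hleib hB Y) := by
  rw [LieRing.IsNilpotent, LieModule.isNilpotent_iff F]
  refine ⟨n, eq_bot_iff.mpr fun f hf ↦ ?_⟩
  obtain ⟨b, hb, hfb⟩ := lowerCentralSeries_leftMulLieSubalgebra_le hleib hB n hf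
  rw [LieSubmodule.mem_bot]
  ext y
  exact (hfb y).trans (hn b hb y y.2)

theorem le_mulSub_of_forall_mul_eq_zero [FiniteDimensional F Y] (hleib : IsLeftLeibniz mul)
    (hB : IsSubalg mul B) (hBY : mulSub mul B Y ≤ Y) {n : ℕ}
    (hn : ∀ b ∈ lcs mul B n, ∀ y ∈ Y, mul b y = 0)
    (hinv : ∀ y ∈ Y, (∀ b ∈ B, mul b y = 0) → y = 0) : Y ≤ mulSub mul B Y := by
  let N := leftMulLieSubalgebra hleib hB Y
  have : LieRing.IsNilpotent N := isNilpotent_leftMulLieSubalgebra hleib hB hn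
  have htriv : LieModule.maxTrivSubmodule F N Y = ⊥ := by
    refine eq_bot_iff.mpr fun y hy ↦ Subtype.ext (hinv y y.2 fun b hb ↦ ?_)
    have hbY : ∀ z ∈ Y, mul b z ∈ Y := fun z hz ↦ hBY (mul_mem_mulSub hb hz)
    exact congrArg Subtype.val (hy ⟨(mul b).restrict hbY, b, hb, fun _ ↦ rfl⟩)
  have hfit : (⊤ : Submodule F Y) ≤ (mulSub mul B Y).comap Y.subtype := by
    rw [← LieSubmodule.top_toSubmodule (R := F) (L := N),
      ← lie_top_top_eq_top_of_maxTrivSubmodule_eq_bot htriv,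
      LieSubmodule.lieIdeal_oper_eq_linear_span', span_le]
    rintro _ ⟨⟨f, b, hb, hf⟩, -, y, -, rfl⟩
    have hfy : ((f y : Y) : A) ∈ mulSub mul B Y := hf y ▸ mul_mem_mulSub hb y.2
    exact hfy
  exact fun y hy ↦ hfit (mem_top (x := ⟨y, hy⟩))

end LeftMultiplication

section Centralizer

/-- The centralizer of `C`, with its structure of a subspace. -/
def centralizerSub (mul : A →ₗ[F] A →ₗ[F] A) (C : Submodule F A) : Submodule F A where
  carrier := centralizerSet mul C
  zero_mem' _ _ := by simp
  add_mem' hx hy c hc := by simp [hx c hc, hy c hc]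
  smul_mem' r _ hx c hc := by simp [hx c hc]

theorem mul_mem_centralizerSub (hleib : IsLeftLeibniz mul) (hI : IsIdealIn mul I S) {a z : A}
    (ha : a ∈ S) (hz : z ∈ centralizerSub mul I) : mul a z ∈ centralizerSub mul I := by
  refine fun w hw ↦ ⟨?_, ?_⟩
  · rw [hleib.mul_mul_eq_sub, (hz w hw).1, (hz _ (hI.2 a ha w hw).1).1, map_zero, sub_zero]
  · rw [hleib, (hz _ (hI.2 a ha w hw).2).2, (hz w hw).2, map_zero, add_zero]

theorem mul_eq_zero_of_forall_mulSub (hleib : IsLeftLeibniz mul)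
    (hZ : ∀ x ∈ centralizerSet mul B, x = 0) (hCB : C ≤ B) {z : A}
    (hBz : ∀ b ∈ B, mul b z = 0) (hz : ∀ x ∈ mulSub mul B C, mul z x = 0) :
    ∀ c ∈ C, mul z c = 0 := by
  refine fun c hc ↦ hZ _ fun b hb ↦ ⟨?_, ?_⟩
  · have hzbc : mul c (mul z b) = mul z (mul c b) := by
      rw [hleib c z b, hBz c (hCB hc), map_zero, LinearMap.zero_apply, zero_add]
    rw [hleib.mul_mul_eq_sub, hzbc, sub_self]
  · rw [hleib, hBz b hb, map_zero, LinearMap.zero_apply, zero_add,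
      hz _ (mul_mem_mulSub hb hc)]

theorem IsSubalg.eq_zero_of_mem_centralizer_lcs (hB : IsSubalg mul B) (hleib : IsLeftLeibniz mul)
    (hZ : ∀ x ∈ centralizerSet mul B, x = 0) {n : ℕ} {z : A}
    (hz : z ∈ centralizerSet mul (lcs mul B n)) (hBz : ∀ b ∈ B, mul b z = 0) : z = 0 := by
  have hzB : ∀ b ∈ lcs mul B 0, mul z b = 0 := by
    refine Nat.decreasingInduction (motive := fun k _ ↦ ∀ b ∈ lcs mul B k, mul z b = 0)
      (fun k _ ih ↦ ?_) (fun b hb ↦ (hz b hb).1) n.zero_le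
    exact mul_eq_zero_of_forall_mulSub hleib hZ (hB.lcs_le k) hBz ih
  exact hZ z fun b hb ↦ ⟨hzB b hb, hBz b hb⟩

theorem IsSubinvariantIn.le_omegaSub_of_le_centralizerSub [FiniteDimensional F B]
    [FiniteDimensional F Y] (hB : IsSubinvariantIn mul B S) (hleib : IsLeftLeibniz mul)
    (hZ : ∀ x ∈ centralizerSet mul B, x = 0) (hYS : Y ≤ S) (hBY : mulSub mul B Y ≤ Y)
    (hY : Y ≤ centralizerSub mul (omegaSub mul B)) : Y ≤ omegaSub mul B := by
  obtain ⟨n, hn⟩ := hB.isSubalg_left.exists_lcs_eq_omegaSub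
  rw [← hn] at hY
  have hYBY : Y ≤ mulSub mul B Y :=
    le_mulSub_of_forall_mul_eq_zero hleib hB.isSubalg_left hBY
      (fun b hb y hy ↦ (hY hy b hb).2)
      fun y hy ↦ hB.isSubalg_left.eq_zero_of_mem_centralizer_lcs hleib hZ (hY hy)
  exact hB.le_omegaSub_of_le_sup_mulSub hYS (hYBY.trans le_sup_right)

theorem IsSubinvariantIn.mem_omegaSub_of_forall_mul_mem [FiniteDimensional F B]
    (hB : IsSubinvariantIn mul B S) (hleib : IsLeftLeibniz mul)
    (hZ : ∀ x ∈ centralizerSet mul B, x = 0) {z : A} (hzS : z ∈ S)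
    (hz : z ∈ centralizerSub mul (omegaSub mul B)) (hBz : ∀ b ∈ B, mul b z ∈ B) :
    z ∈ omegaSub mul B := by
  set Z := centralizerSub mul (omegaSub mul B)
  have hBZ {b x : A} (hb : b ∈ B) (hx : x ∈ Z) : mul b x ∈ Z :=
    mul_mem_centralizerSub hleib (hB.isIdealIn_omegaSub hleib) (hB.le hb) hx
  have hstable : mulSub mul B (Z ⊓ B ⊔ span F {z}) ≤ Z ⊓ B ⊔ span F {z} := by
    refine le_sup_of_le_left (mulSub_le.mpr fun b hb ↦ ?_)
    suffices Z ⊓ B ⊔ span F {z} ≤ (Z ⊓ B).comap (mul b) from this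
    refine sup_le (fun x hx ↦ ⟨hBZ hb hx.1, hB.isSubalg_left b hb x hx.2⟩) ?_
    exact (span_singleton_le_iff_mem _ _).mpr ⟨hBZ hb hz, hBz b hb⟩
  refine hB.le_omegaSub_of_le_centralizerSub hleib hZ ?_ hstable ?_
    (mem_sup_right (mem_span_singleton_self z))
  · exact sup_le (inf_le_right.trans hB.le) ((span_singleton_le_iff_mem _ _).mpr hzS)
  · exact sup_le inf_le_left ((span_singleton_le_iff_mem _ _).mpr hz)

end Centralizer

end LeftLeibniz

theorem stmt_7_general {F A : Type*} [Field F] [AddCommGroup A] [Module F A]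
    (mul : A →ₗ[F] A →ₗ[F] A)
    (hleib : ∀ x y z : A, mul x (mul y z) = mul (mul x y) z + mul y (mul x z))
    (B : Submodule F A) [FiniteDimensional F B] (hB : IsSubinvariantIn mul B ⊤)
    (hZ : ∀ x ∈ centralizerSet mul B, x = 0) :
    centralizerSet mul (omegaSub mul B) ⊆ (omegaSub mul B : Set A) := by
  set Z := centralizerSub mul (omegaSub mul B)
  suffices Z ⊓ ⊤ ≤ omegaSub mul B from fun z hz ↦ this ⟨hz, mem_top⟩
  refine hB.induction (P := fun S ↦ Z ⊓ S ≤ omegaSub mul B) ?_ ?_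
  · exact fun z hz ↦ hB.mem_omegaSub_of_forall_mul_mem hleib hZ mem_top hz.1 fun b hb ↦
      hB.isSubalg_left b hb z hz.2
  · intro I T hBI hIT ih z hz
    refine hB.mem_omegaSub_of_forall_mul_mem hleib hZ mem_top hz.1 fun b hb ↦
      omegaSub_le (ih ⟨?_, ?_⟩)
    · exact mul_mem_centralizerSub hleib (hB.isIdealIn_omegaSub hleib) mem_top hz.1
    · exact (hIT.2 z hz.2 b (hBI.le hb)).2

/-- if `B` is subinvariant in `A` and `Z_A(B) = 0`, then
`Z_A(B^ω) ⊆ B^ω`. -/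
theorem stmt_7 {F A : Type*} [Field F] [AddCommGroup A] [Module F A] [FiniteDimensional F A]
    (mul : A →ₗ[F] A →ₗ[F] A)
    (hleib : ∀ x y z : A, mul x (mul y z) = mul (mul x y) z + mul y (mul x z))
    (B : Submodule F A) (hB : IsSubinvariantIn mul B ⊤)
    (hZ : ∀ x ∈ centralizerSet mul B, x = 0) :
    centralizerSet mul (omegaSub mul B) ⊆ (omegaSub mul B : Set A) :=
  stmt_7_general mul hleib B hB hZ
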